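/- Let x : [0,1] → ℝ be a nonconstant continuous function that admits the Hurst roughness exponent H and for which ξ := lim_{n→∞} ξ_n exists. If H ≤ 1/2, then H ≤ 1 − ξ. -/

import Mathlib

/-!
Everything rests on the exact identity `2 ^ n * V_n^{(2)} = s_n ^ 2 + (x 1 - x 0) ^ 2`
(`two_pow_mul_dyadicVar_two`), which follows by induction on `n` from the parallelogram law: an
increment `b + c` over a dyadic interval splits into `b` and `c` with
`2 * (b ^ 2 + c ^ 2) = (b + c) ^ 2 + (b - c) ^ 2`, and `b - c` is the normalised Faber–Schauder
coefficient. In particular `s_n ^ 2 ≤ 2 ^ n * V_n^{(2)}`.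

Let `p > 1 / H ≥ 2`. The power mean inequality gives
`(V_n^{(2)}) ^ (p / 2) ≤ (2 ^ n) ^ (p / 2 - 1) * V_n^{(p)}`, hence
`s_n ^ p ≤ (2 ^ n) ^ (p - 1) * V_n^{(p)}` (`sSeq_rpow_le`). As `V_n^{(p)} → 0`, taking logarithms
yields `ξ_n ≤ 1 - 1 / p` eventually, so `ξ ≤ 1 - 1 / p`; let `p` decrease to `1 / H`.
-/

open Filter Finset

noncomputable section

/-- The `n`-th dyadic `p`-th variation of `x`. -/
def dyadicVar (x : ℝ → ℝ) (p : ℝ) (n : ℕ) : ℝ :=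
  ∑ k ∈ Finset.range (2 ^ n), |x (((k : ℝ) + 1) / 2 ^ n) - x ((k : ℝ) / 2 ^ n)| ^ p

/-- `x` is nonconstant on `[0,1]`. -/
def Nonconstant (x : ℝ → ℝ) : Prop :=
  ∃ s ∈ Set.Icc (0 : ℝ) 1, ∃ t ∈ Set.Icc (0 : ℝ) 1, x s ≠ x t

/-- `x` admits the Hurst roughness exponent `H ∈ (0,1]`. -/
def HasHurstExponent (x : ℝ → ℝ) (H : ℝ) : Prop :=
  0 < H ∧ H ≤ 1 ∧
  (∀ p : ℝ, 1 / H < p → Tendsto (dyadicVar x p) atTop (nhds 0)) ∧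
  (∀ p : ℝ, 0 < p → p < 1 / H → Tendsto (dyadicVar x p) atTop atTop)

/-- Faber–Schauder coefficient `θ_{m,k}` of `x`. -/
def fsCoeff (x : ℝ → ℝ) (m k : ℕ) : ℝ :=
  2 ^ ((m : ℝ) / 2) *
    (2 * x ((2 * (k : ℝ) + 1) / 2 ^ (m + 1)) - x ((k : ℝ) / 2 ^ m) - x (((k : ℝ) + 1) / 2 ^ m))

/-- `s_n = (∑_{m<n} ∑_{k<2^m} θ_{m,k}²)^{1/2}`. -/
def sSeq (x : ℝ → ℝ) (n : ℕ) : ℝ :=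
  Real.sqrt (∑ m ∈ Finset.range n, ∑ k ∈ Finset.range (2 ^ m), fsCoeff x m k ^ 2)

/-- `ξ_n = (1/n) log₂ s_n`. -/
def xiSeq (x : ℝ → ℝ) (n : ℕ) : ℝ := Real.logb 2 (sSeq x n) / n

/-- A nondecreasing function `ϱ : ℕ → [1,∞)` is subexponential if `(1/n) log ϱ(n) → 0`. -/
def Subexponential (ϱ : ℕ → ℝ) : Prop :=
  Monotone ϱ ∧ (∀ n, 1 ≤ ϱ n) ∧ Tendsto (fun n : ℕ => Real.log (ϱ n) / n) atTop (nhds 0)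

/-- The quantity `2^{-(n-1)} ∑_{k<2^{n-1}} (∑_{m<n} 2^m θ²_{m,⌊2^{m-n+1}k⌋})^{p/2}`;
note that `⌊2^{m-n+1}k⌋ = k / 2^{n-1-m}` (natural number division). -/
def RJquantity (x : ℝ → ℝ) (p : ℝ) (n : ℕ) : ℝ :=
  (∑ k ∈ Finset.range (2 ^ (n - 1)),
      (∑ m ∈ Finset.range n, 2 ^ m * fsCoeff x m (k / 2 ^ (n - 1 - m)) ^ 2) ^ (p / 2)) /
    2 ^ (n - 1)

/-- The reverse Jensen condition on the Faber–Schauder coefficients of `x`. -/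
def ReverseJensen (x : ℝ → ℝ) : Prop :=
  ∀ p : ℝ, 1 ≤ p → ∃ np : ℕ, ∃ ϱ : ℕ → ℝ, Subexponential ϱ ∧
    ∀ n : ℕ, np ≤ n →
      (ϱ n)⁻¹ * sSeq x n ^ p ≤ RJquantity x p n ∧ RJquantity x p n ≤ ϱ n * sSeq x n ^ p

lemma sum_range_two_mul (f : ℕ → ℝ) (N : ℕ) :
    ∑ k ∈ Finset.range (2 * N), f k = ∑ k ∈ Finset.range N, (f (2 * k) + f (2 * k + 1)) := by
  induction N with
  | zero => simp
  | succ N ih =>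
    rw [show 2 * (N + 1) = 2 * N + 1 + 1 by ring, Finset.sum_range_succ, Finset.sum_range_succ,
      Finset.sum_range_succ, ih]
    ring

lemma dyadicVar_two (x : ℝ → ℝ) (n : ℕ) :
    dyadicVar x 2 n =
      ∑ k ∈ Finset.range (2 ^ n), (x (((k : ℝ) + 1) / 2 ^ n) - x ((k : ℝ) / 2 ^ n)) ^ 2 := by
  unfold dyadicVar
  refine Finset.sum_congr rfl fun k _ => ?_
  rw [show (2 : ℝ) = ((2 : ℕ) : ℝ) by norm_num, Real.rpow_natCast, sq_abs]

lemma fsCoeff_sq (x : ℝ → ℝ) (m k : ℕ) :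
    fsCoeff x m k ^ 2 = 2 ^ m *
      (2 * x ((2 * (k : ℝ) + 1) / 2 ^ (m + 1)) - x ((k : ℝ) / 2 ^ m)
        - x (((k : ℝ) + 1) / 2 ^ m)) ^ 2 := by
  unfold fsCoeff
  rw [mul_pow, ← Real.rpow_mul_natCast (by norm_num)]
  congr 1
  rw [← Real.rpow_natCast]
  congr 1
  push_cast
  ring

lemma two_pow_mul_dyadicVar_two (x : ℝ → ℝ) (n : ℕ) :
    2 ^ n * dyadicVar x 2 n =
      (∑ m ∈ Finset.range n, ∑ k ∈ Finset.range (2 ^ m), fsCoeff x m k ^ 2)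
        + (x 1 - x 0) ^ 2 := by
  induction n with
  | zero => simp [dyadicVar]
  | succ n ih =>
    rw [Finset.sum_range_succ, add_right_comm, ← ih, dyadicVar_two, dyadicVar_two,
      show 2 ^ (n + 1) = 2 * 2 ^ n by ring, sum_range_two_mul, Finset.mul_sum, Finset.mul_sum,
      ← Finset.sum_add_distrib]
    refine Finset.sum_congr rfl fun k _ => ?_
    rw [fsCoeff_sq]
    have h1 : ((2 * k : ℕ) : ℝ) / 2 ^ (n + 1) = k / 2 ^ n := by
      rw [pow_succ]; push_cast; field_simp
    have h2 : (((2 * k + 1 : ℕ) : ℝ) + 1) / 2 ^ (n + 1) = (k + 1) / 2 ^ n := by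
      rw [pow_succ]; push_cast; field_simp; ring
    rw [h1, h2]
    push_cast
    ring

lemma dyadicVar_nonneg (x : ℝ → ℝ) (p : ℝ) (n : ℕ) : 0 ≤ dyadicVar x p n :=
  Finset.sum_nonneg fun _ _ => Real.rpow_nonneg (abs_nonneg _) _

lemma sSeq_sq_le (x : ℝ → ℝ) (n : ℕ) : sSeq x n ^ 2 ≤ 2 ^ n * dyadicVar x 2 n := by
  rw [two_pow_mul_dyadicVar_two, sSeq, Real.sq_sqrt (by positivity)]
  linarith [sq_nonneg (x 1 - x 0)]

/-- The power mean inequality comparing quadratic and `p`-th variation. -/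
lemma dyadicVar_two_rpow_le (x : ℝ → ℝ) {p : ℝ} (hp : 2 ≤ p) (n : ℕ) :
    dyadicVar x 2 n ^ (p / 2) ≤ (2 ^ n : ℝ) ^ (p / 2 - 1) * dyadicVar x p n := by
  have h := Real.rpow_sum_le_const_mul_sum_rpow_of_nonneg (s := Finset.range (2 ^ n))
    (f := fun k : ℕ => |x (((k : ℝ) + 1) / 2 ^ n) - x ((k : ℝ) / 2 ^ n)| ^ (2 : ℝ))
    (p := p / 2) (by linarith) (fun _ _ => Real.rpow_nonneg (abs_nonneg _) _)
  simp only [← Real.rpow_mul (abs_nonneg _), mul_div_cancel₀ p (two_ne_zero' ℝ),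
    Finset.card_range] at h
  simpa [dyadicVar] using h

lemma sSeq_rpow_le (x : ℝ → ℝ) {p : ℝ} (hp : 2 ≤ p) (n : ℕ) :
    sSeq x n ^ p ≤ (2 ^ n : ℝ) ^ (p - 1) * dyadicVar x p n := by
  have hs : 0 ≤ sSeq x n := Real.sqrt_nonneg _
  have hN : (0 : ℝ) < 2 ^ n := by positivity
  calc sSeq x n ^ p = (sSeq x n ^ 2) ^ (p / 2) := by
        rw [← Real.rpow_natCast_mul hs]; congr 1; push_cast; ring
    _ ≤ (2 ^ n * dyadicVar x 2 n) ^ (p / 2) :=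
        Real.rpow_le_rpow (by positivity) (sSeq_sq_le x n) (by linarith)
    _ = (2 ^ n : ℝ) ^ (p / 2) * dyadicVar x 2 n ^ (p / 2) :=
        Real.mul_rpow hN.le (dyadicVar_nonneg x 2 n)
    _ ≤ (2 ^ n : ℝ) ^ (p / 2) * ((2 ^ n : ℝ) ^ (p / 2 - 1) * dyadicVar x p n) := by
        gcongr
        exact dyadicVar_two_rpow_le x hp n
    _ = (2 ^ n : ℝ) ^ (p - 1) * dyadicVar x p n := by
        rw [← mul_assoc, ← Real.rpow_add hN]; congr 2; ring

lemma xiSeq_le (x : ℝ → ℝ) {p : ℝ} (hp : 2 ≤ p) {n : ℕ} (hn : 0 < n)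
    (hV : dyadicVar x p n ≤ 1) : xiSeq x n ≤ 1 - 1 / p := by
  have hp0 : 0 < p := by linarith
  have hn' : (0 : ℝ) < n := by exact_mod_cast hn
  have hp1 : 0 ≤ 1 - 1 / p := by
    rw [sub_nonneg, div_le_one hp0]; linarith
  have hs0 : 0 ≤ sSeq x n := Real.sqrt_nonneg _
  rcases hs0.eq_or_lt with h0 | hs
  · -- If `s_n = 0`, the convention `logb 2 0 = 0` makes `ξ_n = 0`.
    rw [xiSeq, ← h0, Real.logb_zero, zero_div]
    exact hp1
  · have h1 : sSeq x n ^ p ≤ (2 : ℝ) ^ ((n : ℝ) * (p - 1)) := by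
      rw [Real.rpow_natCast_mul (by norm_num)]
      refine (sSeq_rpow_le x hp n).trans (mul_le_of_le_one_right (by positivity) hV)
    have h2 := Real.logb_le_logb_of_le (b := 2) (by norm_num) (Real.rpow_pos_of_pos hs p) h1
    rw [Real.logb_rpow (by norm_num) (by norm_num), Real.logb_rpow_eq_mul_logb_of_pos hs] at h2
    rw [xiSeq, div_le_iff₀ hn', show (1 - 1 / p) * (n : ℝ) = (n * (p - 1)) / p by field_simp,
      le_div_iff₀ hp0]
    linarith

theorem stmt6 (x : ℝ → ℝ) (hx : ContinuousOn x (Set.Icc 0 1)) (hnc : Nonconstant x)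
    (H ξ : ℝ) (hH : HasHurstExponent x H) (hξ : Tendsto (xiSeq x) atTop (nhds ξ))
    (hhalf : H ≤ 1 / 2) : H ≤ 1 - ξ := by
  obtain ⟨hH0, -, hconv, -⟩ := hH
  -- It suffices to bound `ξ` by `1 - h` for `0 < h < H`, where `h = 1 / p`.
  suffices h : ∀ h, 0 < h → h < H → h ≤ 1 - ξ by
    refine le_of_forall_lt_imp_le_of_dense fun a ha => ?_
    exact (le_max_left a (H / 2)).trans
      (h _ (lt_max_of_lt_right (by linarith)) (max_lt ha (by linarith)))
  intro h h0 hlt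
  have hp : 2 ≤ 1 / h := by
    rw [le_div_iff₀ h0]; linarith
  have hV := hconv (1 / h) (one_div_lt_one_div_of_lt h0 hlt)
  have hle : ξ ≤ 1 - 1 / (1 / h) := by
    refine le_of_tendsto hξ ?_
    filter_upwards [hV.eventually (ge_mem_nhds one_pos), eventually_gt_atTop 0] with n hn hn0
    exact xiSeq_le x hp hn0 hn
  rw [one_div_one_div] at hle
  linarith
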